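/- Let M=(Q,V,δ,q₀,F) be a DFAwtl with k=#Q states. For every word w∈L(M) with jc_M(w)=m, there exists a word w′∈L(M) such that jc_M(w′)=m and |w′| ≤ (2m+1)(k−1)+m. -/

import Mathlib

/-- A deterministic finite automaton with translucent letters (DFAwtl):
`delta` is a partial transition function, `start` the initial state,
`accept` the set of final states. -/
structure DFAwtl (Q V : Type*) where
  delta : Q → V → Option Q
  start : Q
  accept : Set Q

namespace DFAwtl

variable {Q V : Type*}

/-- Sequential step: `(s, a·y) → (p, y)` when `δ(s,a) = p`. -/
def SeqStep (M : DFAwtl Q V) (c c' : Q × List V) : Prop :=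
  ∃ a : V, c.2 = a :: c'.2 ∧ M.delta c.1 a = some c'.1

/-- Jumping step: `(s, x·a·y) ↻ (p, x·y)` when `x ≠ ε`, `δ(s,a) = p`, and
`δ(s,b)` is undefined for every letter `b` occurring in `x`. -/
def JumpStep (M : DFAwtl Q V) (c c' : Q × List V) : Prop :=
  ∃ (x y : List V) (a : V), x ≠ [] ∧ c.2 = x ++ a :: y ∧ c'.2 = x ++ y ∧
    M.delta c.1 a = some c'.1 ∧ ∀ b ∈ x, M.delta c.1 b = none

/-- Either a sequential or a jumping step. -/
def Step (M : DFAwtl Q V) (c c' : Q × List V) : Prop :=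
  M.SeqStep c c' ∨ M.JumpStep c c'

/-- Reflexive–transitive closure of sequential steps (the relation `→*`). -/
def SeqSteps (M : DFAwtl Q V) : Q × List V → Q × List V → Prop :=
  Relation.ReflTransGen M.SeqStep

/-- Reflexive–transitive closure of all steps (the relation `⊨*`). -/
def Steps (M : DFAwtl Q V) : Q × List V → Q × List V → Prop :=
  Relation.ReflTransGen M.Step

/-- `StepsN M c c' k` : configuration `c'` is reachable from `c` by a computation
containing exactly `k` jumping steps. -/
inductive StepsN (M : DFAwtl Q V) : Q × List V → Q × List V → ℕ → Prop
  | refl (c : Q × List V) : StepsN M c c 0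
  | seq {c c' c'' : Q × List V} {n : ℕ} :
      M.SeqStep c c' → StepsN M c' c'' n → StepsN M c c'' n
  | jump {c c' c'' : Q × List V} {n : ℕ} :
      M.JumpStep c c' → StepsN M c' c'' n → StepsN M c c'' (n + 1)

/-- The language accepted by `M`. -/
def lang (M : DFAwtl Q V) : Set (List V) :=
  {w | ∃ f ∈ M.accept, M.Steps (M.start, w) (f, [])}

/-- `M` accepts `w` by a computation with exactly `k` jumping steps. -/
def AcceptsIn (M : DFAwtl Q V) (w : List V) (k : ℕ) : Prop :=
  ∃ f ∈ M.accept, M.StepsN (M.start, w) (f, []) k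

/-- The jump complexity of a word: the (for a deterministic machine, unique)
number of jumping steps in an accepting computation on `w`. -/
noncomputable def jc (M : DFAwtl Q V) (w : List V) : ℕ :=
  sInf {k | M.AcceptsIn w k}

/-- The jump complexity function: the maximal number of jumps over accepted
words of length `n`. -/
noncomputable def JC (M : DFAwtl Q V) (n : ℕ) : ℕ :=
  sSup {k | ∃ w ∈ M.lang, w.length = n ∧ M.jc w = k}

/-- `JC_M` is bounded by a constant. -/
def ConstBounded (M : DFAwtl Q V) : Prop :=
  ∃ c : ℕ, ∀ w ∈ M.lang, M.jc w ≤ c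

/-- Extended (sequential) transition function on words. -/
def deltaStar (M : DFAwtl Q V) (q : Q) (w : List V) : Option Q :=
  w.foldl (fun o a => o.bind fun p => M.delta p a) (some q)

/-- A state `q` is `a`-deficient if `δ(q,a)` is undefined. -/
def Deficient (M : DFAwtl Q V) (q : Q) (a : V) : Prop :=
  M.delta q a = none

/-- The set `⟨q,a⟩` (empty when `δ(q,a)` is defined). -/
def angleSet (M : DFAwtl Q V) (q : Q) (a : V) : Set Q :=
  {s | M.delta q a = none ∧ ∃ x : List V, x ≠ [] ∧
    M.SeqSteps (q, x) (s, []) ∧ M.Steps (s, a :: x) (q, [])}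

/-- The set `[q,a]` (empty when `δ(q,a)` is defined). -/
def bracketSet (M : DFAwtl Q V) (q : Q) (a : V) : Set Q :=
  {s | M.delta q a = none ∧ ∃ x : List V, x ≠ [] ∧
    M.SeqSteps (q, x) (s, []) ∧ M.SeqSteps (s, a :: x) (q, [])}

/-- Every state of the automaton is useful. -/
def AllUseful (M : DFAwtl Q V) : Prop :=
  ∀ q : Q, (∃ x : List V, M.SeqSteps (M.start, x) (q, [])) ∧
    (∃ (y : List V) (f : Q), f ∈ M.accept ∧ M.SeqSteps ((q : Q), y) (f, []))

/-- `δ(q,x')` is `a`-deficient for every prefix `x'` of `x`. -/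
def PrefixDeficient (M : DFAwtl Q V) (q : Q) (a : V) (x : List V) : Prop :=
  ∀ x' : List V, ∀ p : Q, x' <+: x → M.deltaStar q x' = some p → M.delta p a = none

/-- `δ(q,y')` is `a`-deficient for every proper prefix `y'` of `y`. -/
def ProperPrefixDeficient (M : DFAwtl Q V) (q : Q) (a : V) (y : List V) : Prop :=
  ∀ y' : List V, ∀ p : Q, y' <+: y → y' ≠ y → M.deltaStar q y' = some p → M.delta p a = none

/-- The condition of Claim 2: a pair `(q,a)` with `δ(q,a)` undefined, a nonempty
cycle in `q` visiting only `a`-deficient states, and an accepting path from `q`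
reading a word `y` without `a` through `a`-deficient states and then an `a`. -/
def ClaimTwoCondition (M : DFAwtl Q V) (q : Q) (a : V) : Prop :=
  M.delta q a = none ∧
  (∃ x : List V, x ≠ [] ∧ M.SeqSteps (q, x) (q, []) ∧ M.PrefixDeficient q a x) ∧
  (∃ (y z : List V) (f : Q), a ∉ y ∧ f ∈ M.accept ∧
    M.SeqSteps (q, y ++ a :: z) (f, []) ∧ M.ProperPrefixDeficient q a y)

end DFAwtl

namespace DFAwtl

variable {Q V : Type*}

/-- `p 0, p 1, …, p n = p 0` is a circuit in the transition graph of `M`,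
with the `i`-th edge labelled by the letter `a i`. -/
def IsCircuit (M : DFAwtl Q V) (n : ℕ) (p : ℕ → Q) (a : ℕ → V) : Prop :=
  0 < n ∧ p n = p 0 ∧ ∀ i < n, M.delta (p i) (a i) = some (p (i + 1))

/-- The circuit is `x`-jumping: every state of the circuit from which an `x` is read
is `b`-deficient for some letter `b`, and at least one edge is labelled by a letter
other than `x`. -/
def IsXJumpingCircuit (M : DFAwtl Q V) (n : ℕ) (p : ℕ → Q) (a : ℕ → V) (x : V) : Prop :=
  M.IsCircuit n p a ∧ (∀ i < n, a i = x → ∃ b : V, M.delta (p i) b = none) ∧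
    ∃ i < n, a i ≠ x

/-- The state `q` is reachable from the initial state. -/
def ReachableState (M : DFAwtl Q V) (q : Q) : Prop :=
  ∃ u : List V, M.Steps (M.start, u) (q, [])

end DFAwtl
-- end preamble

/-!
Cut the accepting computation at its `m` jumps into `m + 1` sequential runs, so that `w` is the
shuffle of the words read by the runs and of the `m` letters read by the jumps. Loops can be
deleted from each run, which leaves a subword of length less than `k`. The only danger is that a
jump becomes a sequential step because everything it skips has been deleted. The letters it skips
start with the first letter left after the jump, so it is enough that every run after a jump
keeps its first letter; such a run then has length at most `k`. The total is at most
`(k - 1) + m (k + 1)`, and this is at most `(2 m + 1) (k - 1) + m` when `m = 0` or `2 ≤ k`. A jump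
needs `2 ≤ k`, as the skipped letter must be read later, in another state.
-/

namespace DFAwtl

variable {Q V : Type*} {M : DFAwtl Q V}

lemma deltaStar_eq_foldlM (q : Q) (u : List V) : M.deltaStar q u = u.foldlM M.delta q := by
  induction u using List.reverseRecOn with
  | nil => rfl
  | append_singleton u a ih =>
    rw [List.foldlM_append, ← ih]
    simp [deltaStar, List.foldl_append]

lemma deltaStar_append_eq_some {q p : Q} {u v : List V} :
    M.deltaStar q (u ++ v) = some p ↔
      ∃ r, M.deltaStar q u = some r ∧ M.deltaStar r v = some p := by
  simp only [deltaStar_eq_foldlM, List.foldlM_append, Option.bind_eq_bind, Option.bind_eq_some_iff]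

lemma deltaStar_cons_eq_some {q p : Q} {a : V} {u : List V} :
    M.deltaStar q (a :: u) = some p ↔ ∃ r, M.delta q a = some r ∧ M.deltaStar r u = some p :=
  deltaStar_append_eq_some (u := [a])

lemma exists_shorter_sublist_of_card_le_length [Fintype Q] {q p : Q} {u : List V}
    (hu : M.deltaStar q u = some p) (hlen : Fintype.card Q ≤ u.length) :
    ∃ u', u'.Sublist u ∧ M.deltaStar q u' = some p ∧ u'.length < u.length := by
  have visited (i : Fin (u.length + 1)) :
      ∃ r, M.deltaStar q (u.take i) = some r ∧ M.deltaStar r (u.drop i) = some p := by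
    rwa [← deltaStar_append_eq_some, List.take_append_drop]
  choose state reaches continues using visited
  obtain ⟨i, j, hij, hstate⟩ : ∃ i j, i < j ∧ state i = state j := by
    obtain ⟨i, j, hne, heq⟩ :=
      Fintype.exists_ne_map_eq_of_card_lt state (by simpa using Nat.lt_succ_of_le hlen)
    rcases hne.lt_or_gt with hij | hji
    exacts [⟨i, j, hij, heq⟩, ⟨j, i, hji, heq.symm⟩]
  refine ⟨u.take i ++ u.drop j, ?_, ?_, ?_⟩
  · calc (u.take i ++ u.drop j).Sublist (u.take i ++ u.drop i) :=
          (List.drop_sublist_drop_left u hij.le).append_left _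
      _ = u := List.take_append_drop _ u
  · exact deltaStar_append_eq_some.2 ⟨state i, reaches i, hstate ▸ continues j⟩
  · simp only [List.length_append, List.length_take, List.length_drop]
    omega

lemma exists_sublist_length_lt_card [Fintype Q] {q p : Q} {u : List V}
    (hu : M.deltaStar q u = some p) :
    ∃ u', u'.Sublist u ∧ M.deltaStar q u' = some p ∧ u'.length < Fintype.card Q := by
  induction hn : u.length using Nat.strong_induction_on generalizing u with
  | _ n ih =>
    rcases lt_or_ge u.length (Fintype.card Q) with hlt | hge
    · exact ⟨u, .refl u, hu, hlt⟩
    · obtain ⟨v, hvu, hv, hlen⟩ := exists_shorter_sublist_of_card_le_length hu hge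
      obtain ⟨u', hu'v, hu', hlt⟩ := ih v.length (hn ▸ hlen) hv rfl
      exact ⟨u', hu'v.trans hvu, hu', hlt⟩

lemma exists_sublist_head?_eq_length_le_card [Fintype Q] {q p : Q} {u : List V}
    (hu : M.deltaStar q u = some p) :
    ∃ u', u'.Sublist u ∧ u'.head? = u.head? ∧ M.deltaStar q u' = some p ∧
      u'.length ≤ Fintype.card Q := by
  cases u with
  | nil => exact ⟨[], .refl _, rfl, hu, Nat.zero_le _⟩
  | cons a u =>
    obtain ⟨r, ha, hr⟩ := deltaStar_cons_eq_some.1 hu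
    obtain ⟨u', hsub, hu', hlt⟩ := exists_sublist_length_lt_card hr
    exact ⟨a :: u', hsub.cons_cons a, rfl, deltaStar_cons_eq_some.2 ⟨r, ha, hu'⟩, hlt⟩

lemma StepsN.of_deltaStar {q p : Q} {u v : List V} {d : Q × List V} {n : ℕ}
    (hu : M.deltaStar q u = some p) (h : M.StepsN (p, v) d n) : M.StepsN (q, u ++ v) d n := by
  induction u generalizing q with
  | nil =>
    obtain rfl : q = p := Option.some.inj hu
    exact h
  | cons a u ih =>
    obtain ⟨r, ha, hr⟩ := deltaStar_cons_eq_some.1 hu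
    exact .seq (c' := (r, u ++ v)) ⟨a, rfl, ha⟩ (ih hr)

lemma StepsN.exists_deltaStar_of_zero {c d : Q × List V} (h : M.StepsN c d 0) :
    ∃ u, c.2 = u ++ d.2 ∧ M.deltaStar c.1 u = some d.1 := by
  generalize hn : 0 = n at h
  induction h with
  | refl c => exact ⟨[], rfl, rfl⟩
  | seq hstep _ ih =>
    obtain ⟨a, hword, ha⟩ := hstep
    obtain ⟨u, hu, hrun⟩ := ih hn
    exact ⟨a :: u, by rw [hword, hu, List.cons_append], deltaStar_cons_eq_some.2 ⟨_, ha, hrun⟩⟩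
  | jump => exact absurd hn.symm (Nat.succ_ne_zero _)

lemma StepsN.exists_first_jump {c d : Q × List V} {n : ℕ} (h : M.StepsN c d (n + 1)) :
    ∃ u v p c', c.2 = u ++ v ∧ M.deltaStar c.1 u = some p ∧ M.JumpStep (p, v) c' ∧
      M.StepsN c' d n := by
  generalize hn : n + 1 = k at h
  induction h with
  | refl => exact absurd hn (Nat.succ_ne_zero n)
  | seq hstep _ ih =>
    obtain ⟨a, hword, ha⟩ := hstep
    obtain ⟨u, v, p, c', hu, hrun, hjump, hrest⟩ := ih hn
    exact ⟨a :: u, v, p, c', by rw [hword, hu, List.cons_append],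
      deltaStar_cons_eq_some.2 ⟨_, ha, hrun⟩, hjump, hrest⟩
  | @jump c c' _ _ hjump hrest =>
    obtain rfl := Nat.succ.inj hn
    exact ⟨[], c.2, c.1, c', rfl, rfl, hjump, hrest⟩

lemma JumpStep.exists_sublist {p p' : Q} {v z z' : List V} (h : M.JumpStep (p, v) (p', z))
    (hsub : z'.Sublist z) (hhead : z'.head? = z.head?) :
    ∃ v', v'.Sublist v ∧ v'.head? = v.head? ∧ M.JumpStep (p, v') (p', z') ∧
      v'.length = z'.length + 1 := by
  obtain ⟨x, y, a, hx, rfl, rfl, ha, hskip⟩ := h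
  obtain ⟨b, x, rfl⟩ := List.exists_cons_of_ne_nil hx
  obtain ⟨t, rfl⟩ : ∃ t, z' = b :: t := List.head?_eq_some_iff.1 hhead
  obtain ⟨x', y', rfl, hx', hy'⟩ := List.sublist_append_iff.1 (List.cons_sublist_cons.1 hsub)
  have hbx' : (b :: x').Sublist (b :: x) := hx'.cons_cons b
  refine ⟨b :: x' ++ a :: y', hbx'.append (hy'.cons_cons a), rfl, ?_, ?_⟩
  · exact ⟨b :: x', y', a, List.cons_ne_nil _ _, rfl, rfl, ha, fun c hc ↦ hskip c (hbx'.subset hc)⟩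
  · simp only [List.length_append, List.length_cons]
    omega

/-- The initial run `u` is left untouched, because how far it may be shortened depends on whether
a jump precedes it. -/
lemma StepsN.exists_sublist_after_run [Fintype Q] {q f : Q} {w : List V} {m : ℕ}
    (h : M.StepsN (q, w) (f, []) m) :
    ∃ u v v' p, w = u ++ v ∧ M.deltaStar q u = some p ∧ v'.Sublist v ∧ v'.head? = v.head? ∧
      M.StepsN (p, v') (f, []) m ∧ v'.length ≤ m * (Fintype.card Q + 1) := by
  induction m generalizing q w with
  | zero =>
    obtain ⟨u, hw, hu⟩ := h.exists_deltaStar_of_zero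
    exact ⟨u, [], [], f, hw, hu, .refl _, rfl, .refl _, Nat.zero_le _⟩
  | succ m ih =>
    obtain ⟨u, v, p, ⟨r, z⟩, hw, hu, hjump, hrest⟩ := h.exists_first_jump
    obtain ⟨s, t, t', p', rfl, hs, ht, hthead, htail, htlen⟩ := ih hrest
    obtain ⟨s', hs's, hshead, hs', hslen⟩ := exists_sublist_head?_eq_length_le_card hs
    have hhead : (s' ++ t').head? = (s ++ t).head? := by
      rw [List.head?_append, List.head?_append, hshead, hthead]
    obtain ⟨v', hv, hvhead, hjump', hvlen⟩ := hjump.exists_sublist (hs's.append ht) hhead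
    refine ⟨u, v, v', p, hw, hu, hv, hvhead, .jump hjump' (htail.of_deltaStar hs'), ?_⟩
    calc v'.length = s'.length + t'.length + 1 := by rw [hvlen, List.length_append]
      _ ≤ Fintype.card Q + m * (Fintype.card Q + 1) + 1 := by gcongr
      _ = (m + 1) * (Fintype.card Q + 1) := by ring

lemma StepsN.exists_short_sublist [Fintype Q] {q f : Q} {w : List V} {m : ℕ}
    (h : M.StepsN (q, w) (f, []) m) :
    ∃ w', w'.Sublist w ∧ M.StepsN (q, w') (f, []) m ∧
      w'.length ≤ Fintype.card Q - 1 + m * (Fintype.card Q + 1) := by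
  obtain ⟨u, v, v', p, rfl, hu, hv, -, htail, hlen⟩ := h.exists_sublist_after_run
  obtain ⟨u', hu'u, hu', hlt⟩ := exists_sublist_length_lt_card hu
  refine ⟨u' ++ v', hu'u.append hv, htail.of_deltaStar hu', ?_⟩
  rw [List.length_append]
  exact Nat.add_le_add (Nat.le_sub_one_of_lt hlt) hlen

lemma SeqStep.unique {c d e : Q × List V} (hd : M.SeqStep c d) (he : M.SeqStep c e) : d = e := by
  obtain ⟨a, hword, ha⟩ := hd
  obtain ⟨b, hword', hb⟩ := he
  obtain ⟨rfl, htail⟩ := List.cons.inj (hword.symm.trans hword')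
  exact Prod.ext (Option.some.inj (ha.symm.trans hb)) htail

lemma takeWhile_isNone_delta_append_cons {q p : Q} {x y : List V} {a : V}
    (ha : M.delta q a = some p) (hskip : ∀ b ∈ x, M.delta q b = none) :
    (x ++ a :: y).takeWhile (fun b ↦ (M.delta q b).isNone) = x := by
  rw [List.takeWhile_append_of_pos fun b hb ↦ Option.isNone_iff_eq_none.2 (hskip b hb),
    List.takeWhile_cons_of_neg (by simp [ha]), List.append_nil]

lemma JumpStep.unique {c d e : Q × List V} (hd : M.JumpStep c d) (he : M.JumpStep c e) : d = e := by
  obtain ⟨x, y, a, -, hword, hdword, ha, hskip⟩ := hd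
  obtain ⟨x', y', a', -, hword', heword, ha', hskip'⟩ := he
  have hsplit : x ++ a :: y = x' ++ a' :: y' := hword.symm.trans hword'
  obtain rfl : x = x' := by
    rw [← takeWhile_isNone_delta_append_cons (y := y) ha hskip, hsplit,
      takeWhile_isNone_delta_append_cons ha' hskip']
  obtain ⟨rfl, rfl⟩ := List.cons.inj (List.append_cancel_left hsplit)
  exact Prod.ext (Option.some.inj (ha.symm.trans ha')) (hdword.trans heword.symm)

lemma SeqStep.not_jumpStep {c d e : Q × List V} (h : M.SeqStep c d) : ¬ M.JumpStep c e := by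
  rintro ⟨x, y, b, hx, hword, -, -, hskip⟩
  obtain ⟨a, hword', ha⟩ := h
  obtain ⟨a', x, rfl⟩ := List.exists_cons_of_ne_nil hx
  obtain ⟨rfl, -⟩ := List.cons.inj (hword'.symm.trans hword)
  simp [hskip a (List.mem_cons_self ..)] at ha

lemma not_step_nil {q : Q} {c : Q × List V} : ¬ M.Step (q, []) c := by
  rintro (⟨a, hword, -⟩ | ⟨x, y, a, -, hword, -⟩) <;> simp at hword

lemma StepsN.eq_of_halts {c : Q × List V} {f g : Q} {n k : ℕ}
    (hn : M.StepsN c (f, []) n) (hk : M.StepsN c (g, []) k) : n = k := by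
  generalize hd : (f, ([] : List V)) = d at hn
  induction hn generalizing k with
  | refl c =>
    subst hd
    cases hk with
    | refl => rfl
    | seq hstep _ => exact (not_step_nil (.inl hstep)).elim
    | jump hstep _ => exact (not_step_nil (.inr hstep)).elim
  | seq hstep _ ih =>
    cases hk with
    | refl => exact (not_step_nil (.inl hstep)).elim
    | seq hstep' hrest => exact ih (hstep.unique hstep' ▸ hrest) hd
    | jump hstep' _ => exact (hstep.not_jumpStep hstep').elim
  | jump hstep _ ih =>
    cases hk with
    | refl => exact (not_step_nil (.inr hstep)).elim
    | seq hstep' _ => exact (hstep'.not_jumpStep hstep).elim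
    | jump hstep' hrest => exact congrArg (· + 1) (ih (hstep.unique hstep' ▸ hrest) hd)

lemma steps_iff_exists_stepsN {c d : Q × List V} : M.Steps c d ↔ ∃ n, M.StepsN c d n := by
  constructor
  · intro h
    induction h using Relation.ReflTransGen.head_induction_on with
    | refl => exact ⟨0, .refl _⟩
    | head hstep _ ih =>
      obtain ⟨n, hn⟩ := ih
      exact hstep.elim (fun hseq ↦ ⟨n, .seq hseq hn⟩) (fun hjump ↦ ⟨n + 1, .jump hjump hn⟩)
  · rintro ⟨n, h⟩
    induction h with
    | refl => exact .refl
    | seq hstep _ ih => exact .head (.inl hstep) ih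
    | jump hstep _ ih => exact .head (.inr hstep) ih

lemma mem_lang_iff_exists_acceptsIn {w : List V} : w ∈ M.lang ↔ ∃ n, M.AcceptsIn w n := by
  simp only [lang, AcceptsIn, Set.mem_ofPred_eq, steps_iff_exists_stepsN]
  tauto

lemma acceptsIn_jc {w : List V} (hw : w ∈ M.lang) : M.AcceptsIn w (M.jc w) :=
  Nat.sInf_mem (mem_lang_iff_exists_acceptsIn.1 hw)

lemma AcceptsIn.jc_eq {w : List V} {n : ℕ} (h : M.AcceptsIn w n) : M.jc w = n := by
  obtain ⟨g, -, hg⟩ := acceptsIn_jc (mem_lang_iff_exists_acceptsIn.2 ⟨n, h⟩)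
  obtain ⟨f, -, hf⟩ := h
  exact hg.eq_of_halts hf

lemma StepsN.exists_delta_ne_none {c : Q × List V} {f : Q} {n : ℕ} (h : M.StepsN c (f, []) n)
    {b : V} (hb : b ∈ c.2) : ∃ q, M.delta q b ≠ none := by
  generalize hd : (f, ([] : List V)) = d at h
  induction h with
  | refl =>
    subst hd
    exact (List.not_mem_nil hb).elim
  | seq hstep _ ih =>
    obtain ⟨a, hword, ha⟩ := hstep
    rw [hword, List.mem_cons] at hb
    rcases hb with rfl | hb
    exacts [⟨_, ha ▸ Option.some_ne_none _⟩, ih hb hd]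
  | jump hstep _ ih =>
    obtain ⟨x, y, a, -, hword, hword', ha, -⟩ := hstep
    rw [hword, List.mem_append, List.mem_cons, or_left_comm, ← List.mem_append, ← hword'] at hb
    rcases hb with rfl | hb
    exacts [⟨_, ha ▸ Option.some_ne_none _⟩, ih hb hd]

lemma StepsN.nontrivial_of_jump {c : Q × List V} {f : Q} {n : ℕ}
    (h : M.StepsN c (f, []) (n + 1)) : Nontrivial Q := by
  obtain ⟨_, _, p, c', -, -, ⟨x, y, a, hx, -, hword, -, hskip⟩, hrest⟩ := h.exists_first_jump
  obtain ⟨b, hb⟩ := List.exists_mem_of_ne_nil x hx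
  obtain ⟨q, hq⟩ := hrest.exists_delta_ne_none (hword ▸ List.mem_append_left y hb)
  exact ⟨p, q, fun hpq ↦ hq (hpq ▸ hskip b hb)⟩

lemma jc_le_jc_mul_card_sub_one [Fintype Q] {w : List V} (hw : w ∈ M.lang) :
    M.jc w ≤ M.jc w * (Fintype.card Q - 1) := by
  obtain ⟨f, -, h⟩ := acceptsIn_jc hw
  generalize M.jc w = m at h ⊢
  cases m with
  | zero => exact Nat.zero_le _
  | succ m =>
    have := h.nontrivial_of_jump
    exact Nat.le_mul_of_pos_right _ (Nat.sub_pos_of_lt Fintype.one_lt_card)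

end DFAwtl

theorem stmt_7_general {Q V : Type*} [Fintype Q] (M : DFAwtl Q V) (w : List V)
    (hw : w ∈ M.lang) (m : ℕ) (hm : M.jc w = m) :
    ∃ w' ∈ M.lang, w'.Sublist w ∧ M.jc w' = m ∧
      w'.length ≤ (2 * m + 1) * (Fintype.card Q - 1) + m := by
  subst hm
  obtain ⟨f, hf, h⟩ := DFAwtl.acceptsIn_jc hw
  obtain ⟨w', hsub, h', hlen⟩ := h.exists_short_sublist
  have haccepts : M.AcceptsIn w' (M.jc w) := ⟨f, hf, h'⟩
  refine ⟨w', DFAwtl.mem_lang_iff_exists_acceptsIn.2 ⟨_, haccepts⟩, hsub, haccepts.jc_eq, ?_⟩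
  have hjc := DFAwtl.jc_le_jc_mul_card_sub_one hw
  obtain ⟨k, hk⟩ : ∃ k, Fintype.card Q = k + 1 :=
    Nat.exists_eq_add_one.2 (Fintype.card_pos_iff.2 ⟨M.start⟩)
  rw [hk, Nat.add_sub_cancel] at hlen hjc ⊢
  linarith

/-- for every `w ∈ L(M)` with `jc_M(w) = m` there is a word
`w' ∈ L(M)` with `jc_M(w') = m` and `|w'| ≤ (2m+1)(k−1)+m`, where `k = #Q`. -/
theorem stmt_7 {Q V : Type*} [Fintype Q] [Fintype V] (M : DFAwtl Q V)
    (w : List V) (hw : w ∈ M.lang) (m : ℕ) (hm : M.jc w = m) :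
    ∃ w' ∈ M.lang, M.jc w' = m ∧
      w'.length ≤ (2 * m + 1) * (Fintype.card Q - 1) + m := by
  obtain ⟨w', hlang, -, hjc, hlen⟩ := stmt_7_general M w hw m hm
  exact ⟨w', hlang, hjc, hlen⟩
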